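/- arXiv:2505.13539 — 3 statements merged into one kernel-verified Lean document; each statement's English description precedes it below -/
import Mathlib

section
/- Let C = {(x, y, 0) ∈ ℝ³ : x² + y² = 1} be the unit circle in the xy-plane of ℝ³ and let δ be a real number with 0 < δ < 1. Then the set {p ∈ ℝ³ : dist(p, C) = δ}, where dist(p, C) denotes the infimum of Euclidean distances from p to points of C, is homeomorphic to the product of two circles S¹ × S¹ (the 2-dimensional torus). -/
/-!
Write `r = √(x² + y²)` for the distance from `p = (x, y, z)` to the `z`-axis. By Cauchy–Schwarz in
the plane, the distance from `p` to the unit circle `C` is `√((r - 1)² + z²)`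
(`infDist_unitCircle`). If this equals `δ < 1` then `r > 0`, so `p` has a well-defined longitude
`(x / r, y / r)` and meridian `((r - 1) / δ, z / δ)`, both of norm one. The inverse is the usual
parametrization `(u, v) ↦ ((1 + δ v₀) u₀, (1 + δ v₀) u₁, δ v₁)` of the torus of revolution, for
which `r = 1 + δ v₀`, since `1 + δ v₀ > 0`.
-/

open Metric

namespace CircleTube

/-- The unit circle in the `xy`-plane of `ℝ³`. -/
def unitCircle : Set (EuclideanSpace ℝ (Fin 3)) :=
  {p | p 0 ^ 2 + p 1 ^ 2 = 1 ∧ p 2 = 0}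

/-- The distance from `p` to the `z`-axis. -/
noncomputable def rad (p : EuclideanSpace ℝ (Fin 3)) : ℝ := √(p 0 ^ 2 + p 1 ^ 2)

lemma rad_sq (p : EuclideanSpace ℝ (Fin 3)) : rad p ^ 2 = p 0 ^ 2 + p 1 ^ 2 :=
  Real.sq_sqrt (by positivity)

lemma rad_nonneg (p : EuclideanSpace ℝ (Fin 3)) : 0 ≤ rad p := Real.sqrt_nonneg _

lemma continuous_rad : Continuous rad := by
  unfold rad
  fun_prop

/-- The unit vector `(a, b)` gives the point of the circle nearest to `p`: the radial projection
of `p`, or an arbitrary point of the circle when `p` lies on the axis. -/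
lemma exists_direction (p : EuclideanSpace ℝ (Fin 3)) :
    ∃ a b : ℝ, a ^ 2 + b ^ 2 = 1 ∧ p 0 * a + p 1 * b = rad p := by
  have h := rad_sq p
  rcases (rad_nonneg p).eq_or_lt with h0 | h0
  · refine ⟨1, 0, by norm_num, ?_⟩
    rw [← h0] at h ⊢
    nlinarith [sq_nonneg (p 0), sq_nonneg (p 1)]
  · refine ⟨p 0 / rad p, p 1 / rad p, ?_, ?_⟩
    · field_simp
      exact h.symm
    · field_simp
      linarith

lemma infDist_unitCircle (p : EuclideanSpace ℝ (Fin 3)) :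
    infDist p unitCircle = √((rad p - 1) ^ 2 + p 2 ^ 2) := by
  have h := rad_sq p
  obtain ⟨a, b, hab, hpab⟩ := exists_direction p
  have hmem : !₂[a, b, 0] ∈ unitCircle := by simp [unitCircle, hab]
  apply le_antisymm
  · refine (infDist_le_dist_of_mem hmem).trans ?_
    rw [EuclideanSpace.dist_eq]
    apply Real.sqrt_le_sqrt
    simp only [Fin.sum_univ_three, Real.dist_eq, sq_abs]
    simp
    nlinarith
  · refine (le_infDist ⟨_, hmem⟩).2 fun q hq => ?_
    obtain ⟨hq1, hq2⟩ := hq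
    rw [EuclideanSpace.dist_eq]
    apply Real.sqrt_le_sqrt
    simp only [Fin.sum_univ_three, Real.dist_eq, sq_abs, hq2]
    -- Cauchy–Schwarz, in the form of the Lagrange identity
    have hcs : p 0 * q 0 + p 1 * q 1 ≤ rad p := by
      apply le_of_sq_le_sq _ (rad_nonneg p)
      have : rad p ^ 2 = (p 0 ^ 2 + p 1 ^ 2) * (q 0 ^ 2 + q 1 ^ 2) := by rw [hq1, h, mul_one]
      nlinarith [sq_nonneg (p 0 * q 1 - p 1 * q 0)]
    nlinarith

lemma infDist_eq_iff {δ : ℝ} (hδ : 0 < δ) (p : EuclideanSpace ℝ (Fin 3)) :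
    infDist p unitCircle = δ ↔ (rad p - 1) ^ 2 + p 2 ^ 2 = δ ^ 2 := by
  rw [infDist_unitCircle, Real.sqrt_eq_iff_eq_sq (by positivity) hδ.le]

lemma rad_pos {δ : ℝ} (hδ0 : 0 < δ) (hδ1 : δ < 1) {p : EuclideanSpace ℝ (Fin 3)}
    (hp : infDist p unitCircle = δ) : 0 < rad p := by
  rw [infDist_eq_iff hδ0] at hp
  nlinarith [sq_nonneg (p 2), rad_nonneg p]

lemma mem_circle_iff (u : EuclideanSpace ℝ (Fin 2)) :
    u ∈ sphere (0 : EuclideanSpace ℝ (Fin 2)) 1 ↔ u 0 ^ 2 + u 1 ^ 2 = 1 := by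
  rw [mem_sphere_zero_iff_norm, EuclideanSpace.norm_eq, Real.sqrt_eq_one]
  simp [Fin.sum_univ_two]

/-- The parametrization of the torus of revolution with radii `1` and `δ`. -/
noncomputable def param (δ : ℝ) (u v : EuclideanSpace ℝ (Fin 2)) : EuclideanSpace ℝ (Fin 3) :=
  !₂[(1 + δ * v 0) * u 0, (1 + δ * v 0) * u 1, δ * v 1]

lemma rad_param {δ : ℝ} (hδ0 : 0 < δ) (hδ1 : δ < 1) {u v : EuclideanSpace ℝ (Fin 2)}
    (hu : u 0 ^ 2 + u 1 ^ 2 = 1) (hv : v 0 ^ 2 + v 1 ^ 2 = 1) :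
    rad (param δ u v) = 1 + δ * v 0 ∧ 0 < 1 + δ * v 0 := by
  have hv0 : -1 ≤ v 0 := by nlinarith [sq_nonneg (v 1)]
  have hpos : 0 < 1 + δ * v 0 := by nlinarith
  refine ⟨?_, hpos⟩
  have : ((1 + δ * v 0) * u 0) ^ 2 + ((1 + δ * v 0) * u 1) ^ 2 = (1 + δ * v 0) ^ 2 := by
    linear_combination (1 + δ * v 0) ^ 2 * hu
  simp [rad, param, this, Real.sqrt_sq hpos.le]

/-- The boundary of the `δ`-tube around the unit circle is a torus; the homeomorphism records
the longitude and the meridian of a point. -/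
noncomputable def tubeHomeo (δ : ℝ) (hδ0 : 0 < δ) (hδ1 : δ < 1) :
    {p : EuclideanSpace ℝ (Fin 3) | infDist p unitCircle = δ} ≃ₜ
      (sphere (0 : EuclideanSpace ℝ (Fin 2)) 1 × sphere (0 : EuclideanSpace ℝ (Fin 2)) 1) where
  toFun p :=
    (⟨!₂[p.1 0 / rad p.1, p.1 1 / rad p.1], by
      have h := rad_pos hδ0 hδ1 p.2
      have h2 := rad_sq p.1
      rw [mem_circle_iff]
      simp only [Matrix.cons_val_zero, Matrix.cons_val_one]
      field_simp
      exact h2.symm⟩,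
    ⟨!₂[(rad p.1 - 1) / δ, p.1 2 / δ], by
      have h := (infDist_eq_iff hδ0 _).1 p.2
      rw [mem_circle_iff]
      simp only [Matrix.cons_val_zero, Matrix.cons_val_one]
      field_simp
      exact h⟩)
  invFun w := ⟨param δ w.1.1 w.2.1, by
    obtain ⟨⟨u, hu⟩, ⟨v, hv⟩⟩ := w
    rw [mem_circle_iff] at hu hv
    refine (infDist_eq_iff hδ0 _).2 ?_
    rw [(rad_param hδ0 hδ1 hu hv).1]
    simp [param]
    linear_combination δ ^ 2 * hv⟩
  left_inv p := by
    have h := rad_pos hδ0 hδ1 p.2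
    ext i
    fin_cases i <;> simp [param] <;> field_simp <;> ring
  right_inv w := by
    obtain ⟨⟨u, hu⟩, ⟨v, hv⟩⟩ := w
    rw [mem_circle_iff] at hu hv
    obtain ⟨h1, h2⟩ := rad_param hδ0 hδ1 hu hv
    ext i <;> simp only [h1] <;> fin_cases i <;> simp [param] <;> field_simp
  continuous_toFun := by
    have hr : Continuous fun p : {p : EuclideanSpace ℝ (Fin 3) | infDist p unitCircle = δ} =>
      rad p.1 := continuous_rad.comp continuous_subtype_val
    have hne : ∀ p : {p : EuclideanSpace ℝ (Fin 3) | infDist p unitCircle = δ}, rad p.1 ≠ 0 :=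
      fun p => (rad_pos hδ0 hδ1 p.2).ne'
    refine .prodMk (.subtype_mk ?_ _) (.subtype_mk ?_ _) <;>
      refine (PiLp.continuous_toLp 2 _).comp (continuous_pi fun i => ?_) <;>
      fin_cases i <;> simp <;> fun_prop (disch := assumption)
  continuous_invFun := by
    refine .subtype_mk ((PiLp.continuous_toLp 2 _).comp (continuous_pi fun i => ?_)) _
    fin_cases i <;> simp <;> fun_prop

end CircleTube

/-- The set of points of `ℝ³` at distance exactly `δ` (with
`0 < δ < 1`) from the unit circle `C` in the `xy`-plane is homeomorphic to
the 2-torus `S¹ × S¹`. -/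
theorem tubular_boundary_of_circle_homeomorphic_torus
    (δ : ℝ) (hδ0 : 0 < δ) (hδ1 : δ < 1) :
    let C : Set (EuclideanSpace ℝ (Fin 3)) :=
      {p | p 0 ^ 2 + p 1 ^ 2 = 1 ∧ p 2 = 0}
    Nonempty
      (({p : EuclideanSpace ℝ (Fin 3) | Metric.infDist p C = δ}) ≃ₜ
        (Metric.sphere (0 : EuclideanSpace ℝ (Fin 2)) 1 ×
         Metric.sphere (0 : EuclideanSpace ℝ (Fin 2)) 1)) :=
  ⟨CircleTube.tubeHomeo δ hδ0 hδ1⟩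
end

section
/- Let G be a connected simple graph on a vertex set V, let v ∈ V, and let S be a subset of the neighbors of v in G (so v ∉ S). Define a simple graph G' on the vertex set V \ S by declaring distinct vertices a, b ∈ V \ S adjacent in G' if and only if: a and b are adjacent in G, or (a = v and b is adjacent in G to some vertex of S), or (b = v and a is adjacent in G to some vertex of S). Then G' is connected. -/
/-! Every surviving vertex `w` is joined to `v` in `G'`, by induction along a path from `w` to `v`
in `G`: if the next vertex survives, the edge to it is still present; if it lies in `S`, then `w`
either is `v` or has been reconnected directly to `v`. -/

/-- Deleting a subset `S` of the neighbors of a vertex `v` from a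
connected simple graph `G`, and reconnecting: distinct vertices `a, b` outside
`S` are adjacent in the new graph `G'` iff they were adjacent in `G`, or one of
them is `v` and the other is adjacent in `G` to some vertex of `S`. The
resulting graph `G'` is connected. -/
theorem graph_sampling_step_preserves_connected
    {V : Type*} (G : SimpleGraph V) (hG : G.Connected)
    (v : V) (S : Set V) (hS : S ⊆ G.neighborSet v) (hvS : v ∉ S)
    (G' : SimpleGraph {a : V // a ∉ S})
    (hG' : ∀ a b : {a : V // a ∉ S},
      G'.Adj a b ↔ a ≠ b ∧
        (G.Adj a.1 b.1 ∨
          (a.1 = v ∧ ∃ s ∈ S, G.Adj b.1 s) ∨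
          (b.1 = v ∧ ∃ s ∈ S, G.Adj a.1 s))) :
    G'.Connected := by
  have key : ∀ w : V, ∀ hw : w ∉ S, G'.Reachable ⟨w, hw⟩ ⟨v, hvS⟩ := by
    intro w
    have h := (SimpleGraph.reachable_iff_reflTransGen w v).1 (hG.preconnected w v)
    induction h using Relation.ReflTransGen.head_induction_on with
    | refl => exact fun _ => SimpleGraph.Reachable.refl _
    | @head a b hab _ ih =>
      intro ha
      by_cases hb : b ∈ S
      · by_cases hav : a = v
        · subst hav
          exact SimpleGraph.Reachable.refl _
        · exact ((hG' ⟨a, ha⟩ ⟨v, hvS⟩).2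
            ⟨fun h => hav (congrArg Subtype.val h), .inr (.inr ⟨rfl, b, hb, hab⟩)⟩).reachable
      · exact ((hG' ⟨a, ha⟩ ⟨b, hb⟩).2
          ⟨fun h => hab.ne (congrArg Subtype.val h), .inl hab⟩).reachable.trans (ih hb)
  exact { preconnected := fun a b => (key a.1 a.2).trans (key b.1 b.2).symm
          nonempty := ⟨⟨v, hvS⟩⟩ }
end

section
/- Consider the singular Fibonacci knot parameterization F₃ : ℝ → ℝ³ with frequencies n_x = 2, n_y = 3, n_z = 5 and phases φ_x = 0, φ_y = π/2, φ_z = 0, i.e., F₃(t) = (cos(2t), cos(3t + π/2), (1/2)·cos(5t) + (1/2)·sin(3t + π/2)). Then the set of self-intersection points {p ∈ ℝ³ : ∃ s, t ∈ [0, 2π), s ≠ t, F₃(s) = F₃(t) = p} has exactly six elements. -/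
/-!
The curve is `F t = (cos 2t, -sin 3t, (cos 5t + cos 3t) / 2)`, a polynomial map `knotMap` of the
point `(c, u) = (cos t, sin t)` of the unit circle, and `[0, 2π)` parameterizes the circle
bijectively (`mem_selfIntersections_iff`). If two distinct points of the circle have the same
image, then the first coordinate shows that they differ by signs.

* Opposite points `(c, u)`, `(-c, -u)`: this would need `sin 3t = 0` and `cos 4t cos t = 0`
  at once, which is impossible.
* `(c, u)`, `(c, -u)` with `u ≠ 0`: the condition is `sin 3t = 0`, so `c = ± 1/2`, which gives
  the two points `(-1/2, 0, ∓ 1/4)`.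
* `(c, u)`, `(-c, u)` with `c ≠ 0`: the condition is `cos 4t = 0`; with `x = cos 2t` and
  `y = -sin 3t` it reads `x² = 1/2`, and then `y² = (1 + x) / 2`, which gives four points in the
  plane `z = 0`.

The resulting six points are listed in `selfIntersections_eq`; they are pairwise distinct.
-/

open Real Set

namespace FibonacciF3

/-- The curve `F₃` expressed as a polynomial map of `c = cos t` and `u = sin t`. -/
noncomputable def knotMap (c u : ℝ) : ℝ × ℝ × ℝ :=
  (2 * c ^ 2 - 1, -(3 * u - 4 * u ^ 3), 8 * c ^ 5 - 8 * c ^ 3 + c)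

lemma cos_five_mul (t : ℝ) :
    Real.cos (5 * t) = 16 * Real.cos t ^ 5 - 20 * Real.cos t ^ 3 + 5 * Real.cos t := by
  have h : 5 * t = 2 * t + 3 * t := by ring
  have hs : Real.sin t ^ 2 = 1 - Real.cos t ^ 2 := Real.sin_sq t
  rw [h, Real.cos_add, Real.cos_two_mul, Real.cos_three_mul, Real.sin_two_mul,
    Real.sin_three_mul]
  linear_combination
    (-6 * Real.cos t + 8 * Real.cos t * (Real.sin t ^ 2 + 1 - Real.cos t ^ 2)) * hs

lemma curve_eq_knotMap (t : ℝ) :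
    ((Real.cos (2 * t), Real.cos (3 * t + π / 2),
      (1 / 2) * Real.cos (5 * t) + (1 / 2) * Real.sin (3 * t + π / 2)) : ℝ × ℝ × ℝ) =
      knotMap (Real.cos t) (Real.sin t) := by
  rw [Real.cos_add_pi_div_two, Real.sin_add_pi_div_two, Real.cos_two_mul, Real.sin_three_mul,
    Real.cos_three_mul, cos_five_mul, knotMap]
  simp only [Prod.mk.injEq, true_and]
  ring

lemma exists_param {c u : ℝ} (h : c ^ 2 + u ^ 2 = 1) :
    ∃ t ∈ Ico (0 : ℝ) (2 * π), Real.cos t = c ∧ Real.sin t = u := by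
  have hn : ‖(⟨c, u⟩ : ℂ)‖ = 1 := by
    rw [Complex.norm_eq_sqrt_sq_add_sq]; simp [h]
  have hne : (⟨c, u⟩ : ℂ) ≠ 0 := by
    intro h0; rw [h0] at hn; simp at hn
  refine ⟨toIcoMod Real.two_pi_pos 0 (Complex.arg ⟨c, u⟩), ?_, ?_, ?_⟩
  · simpa using toIcoMod_mem_Ico Real.two_pi_pos 0 (Complex.arg ⟨c, u⟩)
  · rw [toIcoMod, zsmul_eq_mul, Real.cos_sub_int_mul_two_pi, Complex.cos_arg hne, hn]
    simp
  · rw [toIcoMod, zsmul_eq_mul, Real.sin_sub_int_mul_two_pi, Complex.sin_arg, hn]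
    simp

lemma param_injective {s t : ℝ} (hs : s ∈ Ico (0 : ℝ) (2 * π)) (ht : t ∈ Ico (0 : ℝ) (2 * π))
    (hc : Real.cos s = Real.cos t) (hu : Real.sin s = Real.sin t) : s = t := by
  have h1 : Real.cos (s - t) = 1 := by
    rw [Real.cos_sub, hc, hu]
    nlinarith [Real.sin_sq_add_cos_sq t]
  have h2 : s - t = 0 :=
    (Real.cos_eq_one_iff_of_lt_of_lt (by linarith [hs.1, ht.2]) (by linarith [hs.2, ht.1])).1 h1
  linarith

/-- Self-intersections of the curve correspond to pairs of distinct points of the unit circle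
with the same image under `knotMap`. -/
lemma mem_selfIntersections_iff (p : ℝ × ℝ × ℝ) :
    (∃ s ∈ Ico (0 : ℝ) (2 * π), ∃ t ∈ Ico (0 : ℝ) (2 * π), s ≠ t ∧
      knotMap (Real.cos s) (Real.sin s) = p ∧ knotMap (Real.cos t) (Real.sin t) = p) ↔
    ∃ c u c' u' : ℝ, c ^ 2 + u ^ 2 = 1 ∧ c' ^ 2 + u' ^ 2 = 1 ∧ ¬(c = c' ∧ u = u') ∧
      knotMap c u = p ∧ knotMap c' u' = p := by
  constructor
  · rintro ⟨s, hs, t, ht, hne, h1, h2⟩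
    exact ⟨_, _, _, _, Real.cos_sq_add_sin_sq s, Real.cos_sq_add_sin_sq t,
      fun h => hne (param_injective hs ht h.1 h.2), h1, h2⟩
  · rintro ⟨c, u, c', u', h, h', hne, h1, h2⟩
    obtain ⟨s, hs, rfl, rfl⟩ := exists_param h
    obtain ⟨t, ht, rfl, rfl⟩ := exists_param h'
    exact ⟨s, hs, t, ht, fun e => hne (by simp [e]), h1, h2⟩

/-- The list of self-intersection points. The hypotheses say that `a = √2 / 2`, `b = cos (π / 8)`
and `d = sin (π / 8)`. -/
lemma selfIntersections_eq {a b d : ℝ} (ha : 0 < a) (hb : 0 < b) (hd : 0 < d)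
    (ha2 : a ^ 2 = 1 / 2) (hb2 : b ^ 2 = (1 + a) / 2) (hd2 : d ^ 2 = (1 - a) / 2)
    (p : ℝ × ℝ × ℝ) :
    (∃ c u c' u' : ℝ, c ^ 2 + u ^ 2 = 1 ∧ c' ^ 2 + u' ^ 2 = 1 ∧ ¬(c = c' ∧ u = u') ∧
      knotMap c u = p ∧ knotMap c' u' = p) ↔
    p ∈ ({(a, b, 0), (a, -b, 0), (-a, d, 0), (-a, -d, 0), (-1 / 2, 0, 1 / 4),
      (-1 / 2, 0, -1 / 4)} : Set (ℝ × ℝ × ℝ)) := by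
  constructor
  · rintro ⟨c, u, c', u', h, h', hne, rfl, hp⟩
    simp only [knotMap, Prod.mk.injEq] at hp
    obtain ⟨hx, hy, hz⟩ := hp
    have hc : (c' - c) * (c' + c) = 0 := by linear_combination hx / 2
    have hu : (u' - u) * (u' + u) = 0 := by linear_combination h' - h - hx / 2
    simp only [knotMap, mem_insert_iff, mem_singleton_iff, Prod.mk.injEq]
    rcases mul_eq_zero.1 hc with hc | hc <;> rcases mul_eq_zero.1 hu with hu | hu
    · exact absurd ⟨by linarith, by linarith⟩ hne
    · have e1 : c' = c := by linarith
      have e2 : u' = -u := by linarith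
      subst e1 e2
      have hu0 : u ≠ 0 := fun h0 => hne ⟨rfl, by simp [h0]⟩
      have hu2 : 3 - 4 * u ^ 2 = 0 :=
        mul_left_cancel₀ hu0 (by linear_combination hy / 2)
      have hc2 : (c' - 1 / 2) * (c' + 1 / 2) = 0 := by linear_combination h + hu2 / 4
      have hy0 : -(3 * u - 4 * u ^ 3) = 0 := by linear_combination -u * hu2
      rcases mul_eq_zero.1 hc2 with e | e
      · have e : c' = 1 / 2 := by linarith
        subst e
        norm_num [hy0]
      · have e : c' = -(1 / 2) := by linarith
        subst e
        norm_num [hy0]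
    · have e1 : c' = -c := by linarith
      have e2 : u' = u := by linarith
      subst e1 e2
      have hc0 : c ≠ 0 := fun h0 => hne ⟨by simp [h0], rfl⟩
      have h4 : 8 * c ^ 4 - 8 * c ^ 2 + 1 = 0 :=
        mul_left_cancel₀ hc0 (by linear_combination -hz / 2)
      have hz0 : 8 * c ^ 5 - 8 * c ^ 3 + c = 0 := by linear_combination c * h4
      have hx2 : (2 * c ^ 2 - 1 - a) * (2 * c ^ 2 - 1 + a) = 0 := by
        linear_combination h4 / 2 - ha2
      have hus : u' ^ 2 = 1 - c ^ 2 := by linarith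
      -- `sin² 3t = (1 - c²) (4 c² - 1)²` reduces to `c²` modulo `cos 4t = 8 c⁴ - 8 c² + 1`.
      have hy2 : (-(3 * u' - 4 * u' ^ 3)) ^ 2 = c ^ 2 := by
        have : (-(3 * u' - 4 * u' ^ 3)) ^ 2 = u' ^ 2 * (3 - 4 * u' ^ 2) ^ 2 := by ring
        rw [this, hus]
        linear_combination (1 - 2 * c ^ 2) * h4
      rcases mul_eq_zero.1 hx2 with e | e
      · have hyb : (-(3 * u' - 4 * u' ^ 3)) ^ 2 = b ^ 2 := by
          rw [hy2, hb2]; linear_combination e / 2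
        have ex : 2 * c ^ 2 - 1 = a := by linarith
        rcases sq_eq_sq_iff_eq_or_eq_neg.1 hyb with ey | ey <;> simp [ex, ey, hz0]
      · have hyd : (-(3 * u' - 4 * u' ^ 3)) ^ 2 = d ^ 2 := by
          rw [hy2, hd2]; linear_combination e / 2
        have ex : 2 * c ^ 2 - 1 = -a := by linarith
        rcases sq_eq_sq_iff_eq_or_eq_neg.1 hyd with ey | ey <;> simp [ex, ey, hz0]
    · have e1 : c' = -c := by linarith
      have e2 : u' = -u := by linarith
      subst e1 e2
      exfalso
      have h1 : c * (8 * c ^ 4 - 8 * c ^ 2 + 1) = 0 := by linear_combination -hz / 2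
      have h2 : u * (3 - 4 * u ^ 2) = 0 := by linear_combination hy / 2
      rcases mul_eq_zero.1 h2 with h2 | h2
      · have hc1 : c ^ 2 = 1 := by rw [h2] at h; linarith
        rcases mul_eq_zero.1 h1 with h1 | h1
        · rw [h1] at hc1; norm_num at hc1
        · rw [show c ^ 4 = (c ^ 2) ^ 2 by ring, hc1] at h1; norm_num at h1
      · have hc1 : c ^ 2 = 1 / 4 := by linarith
        rcases mul_eq_zero.1 h1 with h1 | h1
        · rw [h1] at hc1; norm_num at hc1
        · rw [show c ^ 4 = (c ^ 2) ^ 2 by ring, hc1] at h1; norm_num at h1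
  · have h3 : √3 ^ 2 = (3 : ℝ) := Real.sq_sqrt (by norm_num)
    have h30 : (0 : ℝ) < √3 := Real.sqrt_pos.2 (by norm_num)
    have hbd : b * d = a / 2 := by
      have : (b * d) ^ 2 = (a / 2) ^ 2 := by
        rw [mul_pow, hb2, hd2]; linear_combination -ha2 / 2
      exact (sq_eq_sq₀ (by positivity) (by positivity)).1 this
    -- `sin (3π/8) = cos (π/8)` and `sin (9π/8) = -sin (π/8)`.
    have hdb : 3 * d - 4 * d ^ 3 = b :=
      mul_left_cancel₀ hd.ne' (by
        linear_combination (3 - 4 * d ^ 2 - 2 * (1 - a)) * hd2 - hbd - ha2)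
    have hbd' : 3 * b - 4 * b ^ 3 = -d :=
      mul_left_cancel₀ hb.ne' (by
        linear_combination (3 - 4 * b ^ 2 - 2 * (1 + a)) * hb2 + hbd - ha2)
    have hbz : 8 * b ^ 5 - 8 * b ^ 3 + b = 0 := by
      linear_combination b * (8 * (b ^ 2 + (1 + a) / 2) - 8) * hb2 + 2 * b * ha2
    have hdz : 8 * d ^ 5 - 8 * d ^ 3 + d = 0 := by
      linear_combination d * (8 * (d ^ 2 + (1 - a) / 2) - 8) * hd2 + 2 * d * ha2
    simp only [mem_insert_iff, mem_singleton_iff]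
    rintro (rfl | rfl | rfl | rfl | rfl | rfl)
    · refine ⟨b, -d, -b, -d, by linarith, by linarith, fun h => by linarith [h.1], ?_, ?_⟩ <;>
        simp only [knotMap, Prod.mk.injEq] <;> refine ⟨?_, ?_, ?_⟩ <;> linarith
    · refine ⟨b, d, -b, d, by linarith, by linarith, fun h => by linarith [h.1], ?_, ?_⟩ <;>
        simp only [knotMap, Prod.mk.injEq] <;> refine ⟨?_, ?_, ?_⟩ <;> linarith
    · refine ⟨d, b, -d, b, by linarith, by linarith, fun h => by linarith [h.1], ?_, ?_⟩ <;>
        simp only [knotMap, Prod.mk.injEq] <;> refine ⟨?_, ?_, ?_⟩ <;> linarith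
    · refine ⟨d, -b, -d, -b, by linarith, by linarith, fun h => by linarith [h.1], ?_, ?_⟩ <;>
        simp only [knotMap, Prod.mk.injEq] <;> refine ⟨?_, ?_, ?_⟩ <;> linarith
    · refine ⟨-1 / 2, √3 / 2, -1 / 2, -(√3 / 2), by linarith, by linarith,
        fun h => by linarith [h.2], ?_, ?_⟩ <;>
        simp only [knotMap, Prod.mk.injEq] <;> refine ⟨by norm_num, ?_, by norm_num⟩
      · linear_combination √3 / 2 * h3
      · linear_combination -√3 / 2 * h3
    · refine ⟨1 / 2, √3 / 2, 1 / 2, -(√3 / 2), by linarith, by linarith,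
        fun h => by linarith [h.2], ?_, ?_⟩ <;>
        simp only [knotMap, Prod.mk.injEq] <;> refine ⟨by norm_num, ?_, by norm_num⟩
      · linear_combination √3 / 2 * h3
      · linear_combination -√3 / 2 * h3

lemma ncard_points {a b d : ℝ} (ha : 0 < a) (hb : 0 < b) (hd : 0 < d) :
    Set.ncard ({(a, b, 0), (a, -b, 0), (-a, d, 0), (-a, -d, 0), (-1 / 2, 0, 1 / 4),
      (-1 / 2, 0, -1 / 4)} : Set (ℝ × ℝ × ℝ)) = 6 := by
  have h1 : b ≠ -b := by intro h; linarith
  have h2 : d ≠ -d := by intro h; linarith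
  have h3 : a ≠ -a := by intro h; linarith
  rw [ncard_insert_of_notMem, ncard_insert_of_notMem, ncard_insert_of_notMem,
    ncard_insert_of_notMem, ncard_insert_of_notMem, ncard_singleton] <;>
    simp only [mem_insert_iff, mem_singleton_iff, Prod.mk.injEq] <;>
    norm_num [h1, h2, h3, hb.ne', hd.ne']

end FibonacciF3

open FibonacciF3 in
/-- The singular Fibonacci knot `F₃` with frequencies `2, 3, 5`
and phases `0, π/2, 0` has exactly six self-intersection points. -/
theorem fibonacci_F3_six_self_intersections :
    let F : ℝ → ℝ × ℝ × ℝ := fun t =>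
      (Real.cos (2 * t),
       Real.cos (3 * t + π / 2),
       (1 / 2) * Real.cos (5 * t) + (1 / 2) * Real.sin (3 * t + π / 2))
    Set.ncard {p : ℝ × ℝ × ℝ |
        ∃ s ∈ Set.Ico (0 : ℝ) (2 * π), ∃ t ∈ Set.Ico (0 : ℝ) (2 * π),
          s ≠ t ∧ F s = p ∧ F t = p} = 6 := by
  intro F
  have hF : ∀ t, F t = knotMap (Real.cos t) (Real.sin t) := curve_eq_knotMap
  have ha : 0 < √2 / 2 := by positivity
  have ha2 : (√2 / 2) ^ 2 = 1 / 2 := by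
    rw [div_pow, Real.sq_sqrt (by norm_num)]; norm_num
  have ha1 : √2 / 2 < 1 := by nlinarith
  have hb : 0 < (1 + √2 / 2) / 2 := by linarith
  have hd : 0 < (1 - √2 / 2) / 2 := by linarith
  rw [← ncard_points ha (Real.sqrt_pos.2 hb) (Real.sqrt_pos.2 hd)]
  congr 1
  ext p
  simp only [hF, mem_ofPred_eq]
  rw [mem_selfIntersections_iff]
  exact selfIntersections_eq ha (Real.sqrt_pos.2 hb) (Real.sqrt_pos.2 hd) ha2
    (Real.sq_sqrt hb.le) (Real.sq_sqrt hd.le) p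
end
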